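/- Let d ≥ 1 and let μ, ν be Borel probability measures on ℝ^d with finite second moments. If μ and ν are in convex order (μ ≼_c ν), then sup over π ∈ Π(μ,ν) of ∫ ⟨x,y⟩ dπ(x,y) ≥ ∫ |x|² dμ(x). -/

import Mathlib

open MeasureTheory Metric RealInnerProductSpace

noncomputable section

/-- The set of couplings of two measures on `ℝ^d`. -/
def Couplings {d : ℕ} (α β : Measure (EuclideanSpace ℝ (Fin d))) :
    Set (Measure (EuclideanSpace ℝ (Fin d) × EuclideanSpace ℝ (Fin d))) :=
  {π | π.map Prod.fst = α ∧ π.map Prod.snd = β}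

/-- `C(α,β) = sup_{π ∈ Π(α,β)} ∫ ⟨x,y⟩ dπ`. -/
def OTcost {d : ℕ} (α β : Measure (EuclideanSpace ℝ (Fin d))) : ℝ :=
  sSup {r : ℝ | ∃ π ∈ Couplings α β, r = ∫ p, ⟪p.1, p.2⟫ ∂π}

/-- Convex order: `∫ f dμ ≤ ∫ f dν` for all convex `f` integrable w.r.t. both. -/
def ConvexOrder {d : ℕ} (μ ν : Measure (EuclideanSpace ℝ (Fin d))) : Prop :=
  ∀ f : EuclideanSpace ℝ (Fin d) → ℝ, ConvexOn ℝ Set.univ f →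
    Integrable f μ → Integrable f ν → ∫ x, f x ∂μ ≤ ∫ x, f x ∂ν

/-! Since `μ` and `ν` are probability measures, the functional `φ x + ψ y ↦ ∫ φ dμ + ∫ ψ dν` is well
defined. It extends to a positive functional on all functions lying between two such sums
(M. Riesz), and the extension is integration against a coupling (Riesz–Markov–Kakutani). Extending
so that `t - f` has nonnegative value gives Kantorovich duality with attainment: if every pair of
potentials with `φ x + ψ y ≤ f (x, y)` has value at most `t`, some coupling has cost at most `t`.

For the cost `‖x - y‖² / 2` the potentials satisfy `(φ x - ‖x‖² / 2) + ⟪x, y⟫ ≤ ‖y‖² / 2 - ψ y`.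
The supremum over `x` of the left-hand side is a convex function `g` of `y`, and
`φ x + ‖x‖² / 2 ≤ g x` on the diagonal, so the convex order applied to `g` bounds the value of the
pair by `t = (∫ ‖y‖² dν - ∫ ‖x‖² dμ) / 2`. A coupling of cost at most `t` satisfies
`∫ ⟪x, y⟫ dπ ≥ ∫ ‖x‖² dμ`. -/

open Filter Topology Set
open scoped CompactlySupported BoundedContinuousFunction NNReal

section PositiveExtension

variable {α : Type*}

/-- The functions lying between two elements of `D`: the domain to which positive functionals on
`D` extend. -/
def orderBoundedBy (D : Submodule ℝ (α → ℝ)) : Submodule ℝ (α → ℝ) where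
  carrier := {f | ∃ g ∈ D, ∃ g' ∈ D, g ≤ f ∧ f ≤ g'}
  zero_mem' := ⟨0, D.zero_mem, 0, D.zero_mem, le_rfl, le_rfl⟩
  add_mem' := by
    rintro f₁ f₂ ⟨g₁, hg₁, g₁', hg₁', hle₁, hle₁'⟩ ⟨g₂, hg₂, g₂', hg₂', hle₂, hle₂'⟩
    exact ⟨g₁ + g₂, D.add_mem hg₁ hg₂, g₁' + g₂', D.add_mem hg₁' hg₂', add_le_add hle₁ hle₂,
      add_le_add hle₁' hle₂'⟩
  smul_mem' := by
    rintro r f ⟨g, hg, g', hg', hle, hle'⟩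
    rcases le_total 0 r with hr | hr
    · exact ⟨r • g, D.smul_mem r hg, r • g', D.smul_mem r hg',
        smul_le_smul_of_nonneg_left hle hr, smul_le_smul_of_nonneg_left hle' hr⟩
    · exact ⟨r • g', D.smul_mem r hg', r • g, D.smul_mem r hg,
        smul_le_smul_of_nonpos_left hle' hr, smul_le_smul_of_nonpos_left hle hr⟩

variable {D : Submodule ℝ (α → ℝ)}

lemma le_orderBoundedBy : D ≤ orderBoundedBy D :=
  fun g hg => ⟨g, hg, g, hg, le_rfl, le_rfl⟩

lemma mem_orderBoundedBy_of_norm_le (hD : 1 ∈ D) {f : α → ℝ} {C : ℝ} (hf : ∀ x, ‖f x‖ ≤ C) :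
    f ∈ orderBoundedBy D :=
  ⟨-C • 1, D.smul_mem _ hD, C • 1, D.smul_mem _ hD,
    fun x => by simpa using neg_le_of_abs_le (hf x), fun x => by simpa using le_of_abs_le (hf x)⟩

/-- The convex cone generated by `h` and the nonnegative functions. A functional nonnegative on it
is positive and also has a nonnegative value at `h`. -/
def nonnegConeAdjoin (h : α → ℝ) : PointedCone ℝ (α → ℝ) where
  carrier := {g | ∃ r : ℝ, 0 ≤ r ∧ r • h ≤ g}
  zero_mem' := ⟨0, le_rfl, (zero_smul ℝ h).le⟩
  add_mem' := by
    rintro g₁ g₂ ⟨r₁, hr₁, hg₁⟩ ⟨r₂, hr₂, hg₂⟩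
    exact ⟨r₁ + r₂, add_nonneg hr₁ hr₂, (add_smul r₁ r₂ h).trans_le (add_le_add hg₁ hg₂)⟩
  smul_mem' := by
    rintro ⟨c, hc⟩ g ⟨r, hr, hg⟩
    exact ⟨c * r, mul_nonneg hc hr,
      (mul_smul c r h).trans_le (smul_le_smul_of_nonneg_left hg hc)⟩

lemma nonneg_of_nonneg_majorants {L : D →ₗ[ℝ] ℝ} {h : α → ℝ} (hh : h ∈ orderBoundedBy D)
    (hL : ∀ g : D, h ≤ g → 0 ≤ L g) {g : D} (hg : 0 ≤ (g : α → ℝ)) : 0 ≤ L g := by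
  obtain ⟨-, -, b, hb, -, hhb⟩ := hh
  have add_nsmul_nonneg (n : ℕ) : 0 ≤ L ⟨b, hb⟩ + n * L g := by
    have hle : h ≤ (⟨b, hb⟩ + n • g : D) := hhb.trans (le_add_of_nonneg_right (nsmul_nonneg hg n))
    simpa only [map_add, map_nsmul, nsmul_eq_mul] using hL _ hle
  by_contra! hneg
  obtain ⟨n, hn⟩ := exists_nat_gt (L ⟨b, hb⟩ / -L g)
  rw [div_lt_iff₀ (neg_pos.2 hneg)] at hn
  linarith [add_nsmul_nonneg n]

lemma nonneg_of_mem_nonnegConeAdjoin {L : D →ₗ[ℝ] ℝ} {h : α → ℝ} (hh : h ∈ orderBoundedBy D)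
    (hL : ∀ g : D, h ≤ g → 0 ≤ L g) {g : D} (hg : (g : α → ℝ) ∈ nonnegConeAdjoin h) :
    0 ≤ L g := by
  obtain ⟨r, hr, hrg⟩ := hg
  rcases hr.eq_or_lt with rfl | hr
  · exact nonneg_of_nonneg_majorants hh hL (by simpa using hrg)
  · have hle : h ≤ (r⁻¹ • g : D) := (le_inv_smul_iff_of_pos hr).2 hrg
    have := hL _ hle
    rw [map_smul, smul_eq_mul] at this
    exact nonneg_of_mul_nonneg_right this (inv_pos.2 hr)

theorem exists_positiveLinearMap_extension (L : D →ₗ[ℝ] ℝ) (h : orderBoundedBy D)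
    (hL : ∀ g : D, (h : α → ℝ) ≤ g → 0 ≤ L g) :
    ∃ Λ : orderBoundedBy D →ₚ[ℝ] ℝ, (∀ g : D, Λ ⟨g, le_orderBoundedBy g.2⟩ = L g) ∧ 0 ≤ Λ h := by
  let cone : PointedCone ℝ (orderBoundedBy D) :=
    (nonnegConeAdjoin (h : α → ℝ)).comap (orderBoundedBy D).subtype
  let partialL : orderBoundedBy D →ₗ.[ℝ] ℝ :=
    ⟨D.comap (orderBoundedBy D).subtype, L ∘ₗ (orderBoundedBy D).subtype.restrict fun _ hg => hg⟩
  have cofinal (f : orderBoundedBy D) : ∃ g : partialL.domain, g + f ∈ cone := by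
    obtain ⟨_, ⟨g, hg, -, -, hgf, -⟩⟩ := f
    exact ⟨⟨⟨-g, le_orderBoundedBy (D.neg_mem hg)⟩, D.neg_mem hg⟩, 0, le_rfl, fun p => by
      simpa using hgf p⟩
  obtain ⟨Λ, hΛL, hΛ⟩ := riesz_extension cone partialL
    (fun _ hg => nonneg_of_mem_nonnegConeAdjoin h.2 hL hg) cofinal
  refine ⟨.mk₀ Λ fun f hf => hΛ f ⟨0, le_rfl, ?_⟩,
    fun g => hΛL ⟨⟨g, le_orderBoundedBy g.2⟩, g.2⟩, hΛ h ⟨1, zero_le_one, ?_⟩⟩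
  · rw [zero_smul]
    exact hf
  · rw [one_smul]
    rfl

end PositiveExtension

section RieszMeasure

variable {Z : Type*} [TopologicalSpace Z]

/-- The restriction to `C_c(Z, ℝ)` of a positive functional on a space of functions, to which the
Riesz–Markov–Kakutani theorem applies. -/
def restrictCompactlySupported {V : Submodule ℝ (Z → ℝ)} (hV : ∀ f : C_c(Z, ℝ), ⇑f ∈ V)
    (Λ : V →ₚ[ℝ] ℝ) : C_c(Z, ℝ) →ₚ[ℝ] ℝ where
  toFun f := Λ ⟨f, hV f⟩
  map_add' f g := map_add Λ ⟨f, hV f⟩ ⟨g, hV g⟩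
  map_smul' r f := map_smul Λ r ⟨f, hV f⟩
  monotone' f g hfg := OrderHomClass.mono Λ (show (⟨f, hV f⟩ : V) ≤ ⟨g, hV g⟩ from hfg)

lemma exists_compactlySupported_eq_one [R1Space Z] [LocallyCompactSpace Z] {K : Set Z}
    (hK : IsCompact K) :
    ∃ χ : C_c(Z, ℝ), EqOn χ 1 K ∧ ∀ z, χ z ∈ Icc (0 : ℝ) 1 := by
  obtain ⟨χ, h1, hc, -, h01⟩ :=
    exists_continuousMap_one_of_isCompact_subset_isOpen hK isOpen_univ (subset_univ K)
  exact ⟨⟨χ, hc⟩, h1, h01⟩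

variable [T2Space Z] [LocallyCompactSpace Z] [MeasurableSpace Z] [BorelSpace Z]
  {V : Submodule ℝ (Z → ℝ)} (hV : ∀ f : C_c(Z, ℝ), ⇑f ∈ V) (Λ : V →ₚ[ℝ] ℝ)

/-- The measure representing `Λ` on `C_c(Z, ℝ)`. It represents `Λ` on all bounded continuous
functions only if no mass of `Λ` escapes to infinity. -/
def representingMeasure : Measure Z := RealRMK.rieszMeasure (restrictCompactlySupported hV Λ)

lemma integral_representingMeasure (f : C_c(Z, ℝ)) :
    ∫ z, f z ∂representingMeasure hV Λ = Λ ⟨f, hV f⟩ :=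
  RealRMK.integral_rieszMeasure _ f

instance : IsFiniteMeasureOnCompacts (representingMeasure hV Λ) := by
  unfold representingMeasure
  infer_instance

lemma setLIntegral_representingMeasure_le {K : Set Z} (hK : IsCompact K) {f : Z → ℝ} (hfV : f ∈ V)
    (hfc : Continuous f) (hf : 0 ≤ f) :
    ∫⁻ z in K, ENNReal.ofReal (f z) ∂representingMeasure hV Λ ≤ ENNReal.ofReal (Λ ⟨f, hfV⟩) := by
  obtain ⟨χ, hχK, hχ⟩ := exists_compactlySupported_eq_one hK
  let χf : C_c(Z, ℝ) := ⟨⟨fun z => χ z * f z, by fun_prop⟩, χ.hasCompactSupport.mul_right⟩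
  have χf_nonneg (z : Z) : 0 ≤ χf z := mul_nonneg (hχ z).1 (hf z)
  have χf_le : (⟨χf, hV χf⟩ : V) ≤ ⟨f, hfV⟩ := fun z => mul_le_of_le_one_left (hf z) (hχ z).2
  calc ∫⁻ z in K, ENNReal.ofReal (f z) ∂representingMeasure hV Λ
      = ∫⁻ z in K, ENNReal.ofReal (χf z) ∂representingMeasure hV Λ :=
        setLIntegral_congr_fun hK.measurableSet fun z hz => by
          simp [χf, hχK hz]
    _ ≤ ∫⁻ z, ENNReal.ofReal (χf z) ∂representingMeasure hV Λ := setLIntegral_le_lintegral K _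
    _ = ENNReal.ofReal (Λ ⟨χf, hV χf⟩) := by
        rw [← ofReal_integral_eq_lintegral_ofReal
          (f := χf) (χf.continuous.integrable_of_hasCompactSupport χf.hasCompactSupport)
          (ae_of_all _ χf_nonneg), integral_representingMeasure]
    _ ≤ ENNReal.ofReal (Λ ⟨f, hfV⟩) := ENNReal.ofReal_le_ofReal (OrderHomClass.mono Λ χf_le)

lemma lintegral_representingMeasure_le [SigmaCompactSpace Z] {f : Z → ℝ} (hfV : f ∈ V)
    (hfc : Continuous f) (hf : 0 ≤ f) :
    ∫⁻ z, ENNReal.ofReal (f z) ∂representingMeasure hV Λ ≤ ENNReal.ofReal (Λ ⟨f, hfV⟩) := by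
  let K : CompactExhaustion Z := default
  rw [← setLIntegral_univ, ← K.iUnion_eq,
    setLIntegral_iUnion_of_directed _ (monotone_nat_of_le_succ K.subset_succ).directed_le]
  exact iSup_le fun n => setLIntegral_representingMeasure_le hV Λ (K.isCompact n) hfV hfc hf

lemma integrable_and_integral_representingMeasure_le [SigmaCompactSpace Z] {f : Z → ℝ}
    (hfV : f ∈ V) (hfc : Continuous f) (hf : 0 ≤ f) :
    Integrable f (representingMeasure hV Λ) ∧
      ∫ z, f z ∂representingMeasure hV Λ ≤ Λ ⟨f, hfV⟩ := by
  have hle := lintegral_representingMeasure_le hV Λ hfV hfc hf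
  have hΛf : 0 ≤ Λ ⟨f, hfV⟩ := Λ.map_nonneg hf
  refine ⟨(lintegral_ofReal_ne_top_iff_integrable hfc.aestronglyMeasurable
    (ae_of_all _ hf)).1 (hle.trans_lt ENNReal.ofReal_lt_top).ne, ?_⟩
  rw [integral_eq_lintegral_of_nonneg_ae (ae_of_all _ hf) hfc.aestronglyMeasurable]
  exact ENNReal.toReal_le_of_le_ofReal hΛf hle

lemma map_one_le_measureReal_univ_add [IsFiniteMeasure (representingMeasure hV Λ)] (h1V : 1 ∈ V)
    {K : Set Z} (hK : IsCompact K) {u : V} (hu : Kᶜ.indicator 1 ≤ (u : Z → ℝ)) :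
    Λ ⟨1, h1V⟩ ≤ (representingMeasure hV Λ).real univ + Λ u := by
  obtain ⟨χ, hχK, hχ⟩ := exists_compactlySupported_eq_one hK
  have one_le_add : (⟨1, h1V⟩ : V) ≤ ⟨χ, hV χ⟩ + u := fun z => by
    have hz := hu z
    change 1 ≤ χ z + u.1 z
    by_cases hzK : z ∈ K
    · rw [indicator_of_notMem (not_not_intro hzK)] at hz
      rw [hχK hzK]
      exact le_add_of_nonneg_right hz
    · rw [indicator_of_mem (mem_compl hzK)] at hz
      exact le_add_of_nonneg_of_le (hχ z).1 hz
  calc Λ ⟨1, h1V⟩ ≤ Λ (⟨χ, hV χ⟩ + u) := OrderHomClass.mono Λ one_le_add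
    _ = ∫ z, χ z ∂representingMeasure hV Λ + Λ u := by
        rw [map_add, integral_representingMeasure]
    _ ≤ (representingMeasure hV Λ).real univ + Λ u := by
        gcongr
        simpa using integral_mono
          (χ.continuous.integrable_of_hasCompactSupport χ.hasCompactSupport)
          (integrable_const 1) fun z => (hχ z).2

section Normalized

variable (h1V : 1 ∈ V) (hΛ1 : Λ ⟨1, h1V⟩ = 1)
include h1V hΛ1

lemma isProbabilityMeasure_representingMeasure [SigmaCompactSpace Z]
    (tight : ∀ ε > 0, ∃ K, IsCompact K ∧ ∃ u : V, Kᶜ.indicator 1 ≤ (u : Z → ℝ) ∧ Λ u ≤ ε) :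
    IsProbabilityMeasure (representingMeasure hV Λ) := by
  have le_one : representingMeasure hV Λ univ ≤ 1 := by
    simpa [hΛ1] using lintegral_representingMeasure_le hV Λ h1V continuous_one zero_le_one
  have : IsFiniteMeasure (representingMeasure hV Λ) := ⟨le_one.trans_lt ENNReal.one_lt_top⟩
  have one_le : 1 ≤ (representingMeasure hV Λ).real univ := by
    refine le_of_forall_pos_le_add fun ε hε => ?_
    obtain ⟨K, hK, u, hu, hΛu⟩ := tight ε hε
    calc (1 : ℝ) = Λ ⟨1, h1V⟩ := hΛ1.symm
      _ ≤ (representingMeasure hV Λ).real univ + Λ u :=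
          map_one_le_measureReal_univ_add hV Λ h1V hK hu
      _ ≤ (representingMeasure hV Λ).real univ + ε := by gcongr
  exact isProbabilityMeasure_iff_real.2 (le_antisymm
    (ENNReal.toReal_le_of_le_ofReal zero_le_one (le_one.trans_eq ENNReal.ofReal_one.symm)) one_le)

lemma integral_boundedContinuousFunction_representingMeasure [SigmaCompactSpace Z]
    [IsProbabilityMeasure (representingMeasure hV Λ)] (f : Z →ᵇ ℝ) (hfV : ⇑f ∈ V) :
    ∫ z, f z ∂representingMeasure hV Λ = Λ ⟨f, hfV⟩ := by
  have integral_le (g : Z →ᵇ ℝ) (hgV : ⇑g ∈ V) :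
      ∫ z, g z ∂representingMeasure hV Λ ≤ Λ ⟨g, hgV⟩ := by
    have add_norm_nonneg : 0 ≤ ⇑g + ‖g‖ • 1 := fun z => by
      simpa using neg_le_iff_add_nonneg.1 (neg_le_of_abs_le (g.norm_coe_le_norm z))
    have hle := (integrable_and_integral_representingMeasure_le hV Λ
      (V.add_mem hgV (V.smul_mem ‖g‖ h1V)) (by fun_prop) add_norm_nonneg).2
    have integral_add_norm : ∫ z, (⇑g + ‖g‖ • 1) z ∂representingMeasure hV Λ =
        ∫ z, g z ∂representingMeasure hV Λ + ‖g‖ := by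
      simpa using integral_add (g.integrable (representingMeasure hV Λ)) (integrable_const ‖g‖)
    have map_add_norm : Λ ⟨⇑g + ‖g‖ • 1, V.add_mem hgV (V.smul_mem ‖g‖ h1V)⟩ =
        Λ ⟨g, hgV⟩ + ‖g‖ := by
      change Λ (⟨g, hgV⟩ + ‖g‖ • ⟨1, h1V⟩) = _
      rw [map_add, map_smul, hΛ1, smul_eq_mul, mul_one]
    rw [integral_add_norm, map_add_norm] at hle
    exact le_of_add_le_add_right hle
  refine (integral_le f hfV).antisymm ?_
  have hneg := integral_le (-f) (V.neg_mem hfV)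
  have map_neg : Λ ⟨⇑(-f), V.neg_mem hfV⟩ = -Λ ⟨f, hfV⟩ := map_neg Λ ⟨f, hfV⟩
  simp only [BoundedContinuousFunction.coe_neg, Pi.neg_apply, integral_neg] at hneg
  exact neg_le_neg_iff.1 (hneg.trans_eq map_neg)

lemma map_representingMeasure [SigmaCompactSpace Z]
    [IsProbabilityMeasure (representingMeasure hV Λ)] {X : Type*} [TopologicalSpace X]
    [HasOuterApproxClosed X] [MeasurableSpace X] [BorelSpace X] {μ : Measure X} [IsFiniteMeasure μ]
    {T : Z → X} (hT : Continuous T)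
    (hΛT : ∀ φ : X →ᵇ ℝ, ∃ hφ : φ ∘ T ∈ V, Λ ⟨φ ∘ T, hφ⟩ = ∫ x, φ x ∂μ) :
    (representingMeasure hV Λ).map T = μ := by
  have := Measure.isFiniteMeasure_map (representingMeasure hV Λ) T
  refine ext_of_forall_integral_eq_of_IsFiniteMeasure fun φ => ?_
  obtain ⟨hφ, hΛφ⟩ := hΛT φ
  rw [integral_map hT.aemeasurable φ.continuous.aestronglyMeasurable, ← hΛφ]
  exact integral_boundedContinuousFunction_representingMeasure hV Λ h1V hΛ1
    (φ.compContinuous ⟨T, hT⟩) hφ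

end Normalized

end RieszMeasure

section Duality

variable {X Y : Type*} [MeasurableSpace X] [MeasurableSpace Y]

/-- The functions `(x, y) ↦ φ x + ψ y` with `φ` and `ψ` integrable: the test functions of the dual
Kantorovich problem. -/
def splitSums (μ : Measure X) (ν : Measure Y) : Submodule ℝ (X × Y → ℝ) where
  carrier := {g | ∃ φ ψ, Integrable φ μ ∧ Integrable ψ ν ∧ g = fun p => φ p.1 + ψ p.2}
  zero_mem' := ⟨0, 0, integrable_zero _ _ _, integrable_zero _ _ _, by ext; simp⟩
  add_mem' := by
    rintro _ _ ⟨φ₁, ψ₁, hφ₁, hψ₁, rfl⟩ ⟨φ₂, ψ₂, hφ₂, hψ₂, rfl⟩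
    refine ⟨φ₁ + φ₂, ψ₁ + ψ₂, hφ₁.add hφ₂, hψ₁.add hψ₂, ?_⟩
    ext p
    exact add_add_add_comm _ _ _ _
  smul_mem' := by
    rintro r _ ⟨φ, ψ, hφ, hψ, rfl⟩
    exact ⟨r • φ, r • ψ, hφ.smul r, hψ.smul r, funext fun p => mul_add r _ _⟩

variable {μ : Measure X} {ν : Measure Y} {φ : X → ℝ} {ψ : Y → ℝ}

lemma add_mem_splitSums (hφ : Integrable φ μ) (hψ : Integrable ψ ν) :
    (fun p => φ p.1 + ψ p.2) ∈ splitSums μ ν :=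
  ⟨φ, ψ, hφ, hψ, rfl⟩

lemma comp_fst_mem_splitSums (hφ : Integrable φ μ) : φ ∘ Prod.fst ∈ splitSums μ ν :=
  ⟨φ, 0, hφ, integrable_zero _ _ _, funext fun _ => (add_zero _).symm⟩

lemma comp_snd_mem_splitSums (hψ : Integrable ψ ν) : ψ ∘ Prod.snd ∈ splitSums μ ν :=
  ⟨0, ψ, integrable_zero _ _ _, hψ, funext fun _ => (zero_add _).symm⟩

lemma one_mem_splitSums [IsFiniteMeasure μ] : 1 ∈ splitSums μ ν :=
  comp_fst_mem_splitSums (integrable_const 1)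

variable [IsProbabilityMeasure μ] [IsProbabilityMeasure ν]

variable (μ ν) in
/-- The value `∫ φ dμ + ∫ ψ dν` of a pair of potentials. Integrating the sum `φ x + ψ y` against
`μ.prod ν` makes it independent of the choice of the pair. -/
def dualValue : splitSums μ ν →ₗ[ℝ] ℝ where
  toFun g := ∫ p, g.1 p ∂μ.prod ν
  map_add' := by
    rintro ⟨_, φ₁, ψ₁, hφ₁, hψ₁, rfl⟩ ⟨_, φ₂, ψ₂, hφ₂, hψ₂, rfl⟩
    exact integral_add ((hφ₁.comp_fst ν).add (hψ₁.comp_snd μ))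
      ((hφ₂.comp_fst ν).add (hψ₂.comp_snd μ))
  map_smul' r g := integral_const_mul r _

lemma dualValue_add (hφ : Integrable φ μ) (hψ : Integrable ψ ν) :
    dualValue μ ν ⟨_, add_mem_splitSums hφ hψ⟩ = ∫ x, φ x ∂μ + ∫ y, ψ y ∂ν := by
  calc dualValue μ ν ⟨_, add_mem_splitSums hφ hψ⟩
      = ∫ p : X × Y, φ p.1 ∂μ.prod ν + ∫ p : X × Y, ψ p.2 ∂μ.prod ν :=
        integral_add (hφ.comp_fst ν) (hψ.comp_snd μ)
    _ = ∫ x, φ x ∂μ + ∫ y, ψ y ∂ν := by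
        simp only [integral_fun_fst, integral_fun_snd, probReal_univ, one_smul]

lemma dualValue_comp_fst (hφ : Integrable φ μ) :
    dualValue μ ν ⟨_, comp_fst_mem_splitSums hφ⟩ = ∫ x, φ x ∂μ := by
  simp [dualValue, integral_fun_fst]

lemma dualValue_comp_snd (hψ : Integrable ψ ν) :
    dualValue μ ν ⟨_, comp_snd_mem_splitSums hψ⟩ = ∫ y, ψ y ∂ν := by
  simp [dualValue, integral_fun_snd]

lemma dualValue_one : dualValue μ ν ⟨1, one_mem_splitSums⟩ = 1 := by
  simp [dualValue]

lemma dualValue_nonneg_of_sub_le {f : X × Y → ℝ} {t : ℝ}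
    (ht : ∀ φ ψ, Integrable φ μ → Integrable ψ ν → (∀ x y, φ x + ψ y ≤ f (x, y)) →
      ∫ x, φ x ∂μ + ∫ y, ψ y ∂ν ≤ t)
    (g : splitSums μ ν) (hg : ∀ p, t - f p ≤ g.1 p) : 0 ≤ dualValue μ ν g := by
  obtain ⟨_, φ, ψ, hφ, hψ, rfl⟩ := g
  have hle := ht (fun x => t - φ x) (fun y => -ψ y) ((integrable_const t).sub hφ) hψ.neg
    fun x y => by linarith [hg (x, y)]
  rw [integral_sub (integrable_const t) hφ, integral_neg, integral_const, probReal_univ,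
    one_smul] at hle
  linarith [dualValue_add hφ hψ]

variable [TopologicalSpace X] [TopologicalSpace Y]

lemma exists_isCompact_dualValue_le [OpensMeasurableSpace X] [OpensMeasurableSpace Y]
    [T2Space X] [T2Space Y] (hμ : IsTightMeasureSet {μ}) (hν : IsTightMeasureSet {ν})
    {ε : ℝ} (hε : 0 < ε) :
    ∃ K : Set (X × Y), IsCompact K ∧
      ∃ u : splitSums μ ν, Kᶜ.indicator 1 ≤ (u : X × Y → ℝ) ∧ dualValue μ ν u ≤ ε := by
  have hε2 : 0 < ENNReal.ofReal (ε / 2) := ENNReal.ofReal_pos.2 (half_pos hε)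
  rw [isTightMeasureSet_iff_exists_isCompact_measure_compl_le] at hμ hν
  obtain ⟨A, hA, hμA⟩ := hμ _ hε2
  obtain ⟨B, hB, hνB⟩ := hν _ hε2
  have hAm := hA.measurableSet.compl
  have hBm := hB.measurableSet.compl
  have hAi : Integrable (Aᶜ.indicator fun _ => (1 : ℝ)) μ := (integrable_const 1).indicator hAm
  have hBi : Integrable (Bᶜ.indicator fun _ => (1 : ℝ)) ν := (integrable_const 1).indicator hBm
  refine ⟨A ×ˢ B, hA.prod hB, ⟨_, add_mem_splitSums hAi hBi⟩, ?_, ?_⟩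
  · rintro ⟨x, y⟩
    by_cases hx : x ∈ A <;> by_cases hy : y ∈ B <;> simp [hx, hy]
  · rw [dualValue_add hAi hBi]
    simp only [integral_indicator_const _ hAm, integral_indicator_const _ hBm, smul_eq_mul, mul_one]
    have hμA : μ.real Aᶜ ≤ ε / 2 := ENNReal.toReal_le_of_le_ofReal (half_pos hε).le (hμA μ rfl)
    have hνB : ν.real Bᶜ ≤ ε / 2 := ENNReal.toReal_le_of_le_ofReal (half_pos hε).le (hνB ν rfl)
    exact (add_le_add hμA hνB).trans_eq (add_halves ε)

theorem exists_coupling_integral_le [T2Space X] [T2Space Y] [LocallyCompactSpace X]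
    [LocallyCompactSpace Y] [SecondCountableTopology X] [SecondCountableTopology Y] [BorelSpace X]
    [BorelSpace Y] {f : X × Y → ℝ} (hfc : Continuous f) (hf : 0 ≤ f) {a : X → ℝ} {b : Y → ℝ}
    (ha : Integrable a μ) (hb : Integrable b ν) (hfab : ∀ x y, f (x, y) ≤ a x + b y) {t : ℝ}
    (ht : ∀ φ ψ, Integrable φ μ → Integrable ψ ν → (∀ x y, φ x + ψ y ≤ f (x, y)) →
      ∫ x, φ x ∂μ + ∫ y, ψ y ∂ν ≤ t) :
    ∃ π : Measure (X × Y), π.map Prod.fst = μ ∧ π.map Prod.snd = ν ∧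
      Integrable f π ∧ ∫ p, f p ∂π ≤ t := by
  let D := splitSums μ ν
  let V := orderBoundedBy D
  have h1V : 1 ∈ V := le_orderBoundedBy one_mem_splitSums
  have hfV : f ∈ V := ⟨0, D.zero_mem, _, add_mem_splitSums ha hb, hf, fun p => hfab p.1 p.2⟩
  have hcV (g : C_c(X × Y, ℝ)) : ⇑g ∈ V :=
    have ⟨C, hC⟩ := g.hasCompactSupport.exists_bound_of_continuous g.continuous
    mem_orderBoundedBy_of_norm_le one_mem_splitSums hC
  obtain ⟨Λ, hΛ, hΛf⟩ := exists_positiveLinearMap_extension (dualValue μ ν)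
    (t • ⟨1, h1V⟩ - ⟨f, hfV⟩ : V)
    fun g hg => dualValue_nonneg_of_sub_le ht g fun p => by simpa using hg p
  have hΛ1 : Λ ⟨1, h1V⟩ = 1 := (hΛ ⟨1, one_mem_splitSums⟩).trans dualValue_one
  have hΛf_le : Λ ⟨f, hfV⟩ ≤ t := by
    rwa [map_sub, map_smul, hΛ1, smul_eq_mul, mul_one, sub_nonneg] at hΛf
  have hprob : IsProbabilityMeasure (representingMeasure hcV Λ) := by
    refine isProbabilityMeasure_representingMeasure hcV Λ h1V hΛ1 fun ε hε => ?_
    obtain ⟨K, hK, u, hKu, hu⟩ := exists_isCompact_dualValue_le (μ := μ) (ν := ν)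
      isTightMeasureSet_singleton_of_innerRegular isTightMeasureSet_singleton_of_innerRegular hε
    exact ⟨K, hK, ⟨u, le_orderBoundedBy u.2⟩, hKu, (hΛ u).trans_le hu⟩
  have ⟨hfi, hft⟩ := integrable_and_integral_representingMeasure_le hcV Λ hfV hfc hf
  exact ⟨representingMeasure hcV Λ,
    map_representingMeasure hcV Λ h1V hΛ1 continuous_fst fun φ =>
      ⟨_, (hΛ ⟨_, comp_fst_mem_splitSums (φ.integrable μ)⟩).trans
        (dualValue_comp_fst (φ.integrable μ))⟩,
    map_representingMeasure hcV Λ h1V hΛ1 continuous_snd fun ψ =>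
      ⟨_, (hΛ ⟨_, comp_snd_mem_splitSums (ψ.integrable ν)⟩).trans
        (dualValue_comp_snd (ψ.integrable ν))⟩,
    hfi, hft.trans hΛf_le⟩

end Duality

lemma integrable_of_monotone_of_integral_le {α : Type*} [MeasurableSpace α] {μ : Measure α}
    {f : ℕ → α → ℝ} {F : α → ℝ} {C : ℝ} (hf : ∀ n, Integrable (f n) μ) (hmono : Monotone f)
    (hF : ∀ x, Tendsto (fun n => f n x) atTop (𝓝 (F x))) (hC : ∀ n, ∫ x, f n x ∂μ ≤ C) :
    Integrable F μ := by
  have hsub (n : ℕ) : Integrable (fun x => f n x - f 0 x) μ := (hf n).sub (hf 0)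
  have hsub_nonneg (n : ℕ) (x : α) : 0 ≤ f n x - f 0 x := sub_nonneg.2 (hmono n.zero_le x)
  have hlim (x : α) : Tendsto (fun n => f n x - f 0 x) atTop (𝓝 (F x - f 0 x)) :=
    (hF x).sub_const _
  have hFm : AEStronglyMeasurable (fun x => F x - f 0 x) μ :=
    aestronglyMeasurable_of_tendsto_ae atTop (fun n => (hsub n).aestronglyMeasurable)
      (ae_of_all μ hlim)
  have lintegral_le (n : ℕ) :
      ∫⁻ x, ENNReal.ofReal (f n x - f 0 x) ∂μ ≤ ENNReal.ofReal (C - ∫ x, f 0 x ∂μ) := by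
    rw [← ofReal_integral_eq_lintegral_ofReal (hsub n) (ae_of_all μ (hsub_nonneg n)),
      integral_sub (hf n) (hf 0)]
    exact ENNReal.ofReal_le_ofReal (sub_le_sub_right (hC n) _)
  have lintegral_lim := lintegral_tendsto_of_tendsto_of_monotone
    (fun n => (hsub n).aemeasurable.ennreal_ofReal)
    (ae_of_all μ fun x m n hmn => ENNReal.ofReal_le_ofReal (sub_le_sub_right (hmono hmn x) _))
    (ae_of_all μ fun x => ENNReal.tendsto_ofReal (hlim x))
  have hsubF : Integrable (fun x => F x - f 0 x) μ :=
    (lintegral_ofReal_ne_top_iff_integrable hFm (ae_of_all μ fun x =>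
      ge_of_tendsto' (hlim x) fun n => hsub_nonneg n x)).1
      ((le_of_tendsto' lintegral_lim lintegral_le).trans_lt ENNReal.ofReal_lt_top).ne
  exact (hsubF.add (hf 0)).congr (ae_of_all μ fun x => sub_add_cancel (F x) (f 0 x))

section ConvexApproximation

variable {E : Type*} [NormedAddCommGroup E]

lemma integrable_of_lipschitzWith [MeasurableSpace E] [OpensMeasurableSpace E] {μ : Measure E}
    [IsFiniteMeasure μ] {K : ℝ≥0} {f : E → ℝ} (hf : LipschitzWith K f)
    (hμ : Integrable (fun x => ‖x‖) μ) : Integrable f μ := by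
  refine ((integrable_const ‖f 0‖).add (hμ.const_mul (K : ℝ))).mono'
    hf.continuous.aestronglyMeasurable (ae_of_all μ fun x => ?_)
  calc ‖f x‖ ≤ ‖f 0‖ + ‖f x - f 0‖ := norm_le_norm_add_norm_sub' _ _
    _ ≤ ‖f 0‖ + K * ‖x‖ := by simpa using hf.norm_sub_le x 0

lemma exists_monotone_lipschitz_convexOn_tendsto [NormedSpace ℝ E] [HereditarilyLindelofSpace E]
    {f : E → ℝ} (hf : ConvexOn ℝ univ f) (hfc : LowerSemicontinuous f) :
    ∃ p : ℕ → E → ℝ, Monotone p ∧ (∀ n, ConvexOn ℝ univ (p n)) ∧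
      (∀ n, ∃ K, LipschitzWith K (p n)) ∧ ∀ x, Tendsto (fun n => p n x) atTop (𝓝 (f x)) := by
  obtain ⟨l, c, hle, hsup⟩ := hf.real_univ_sSup_of_nat_affine_eq hfc
  let a (i : ℕ) (x : E) : ℝ := l i x + c i
  have a_convex (i : ℕ) : ConvexOn ℝ univ (a i) :=
    ((l i).toLinearMap.convexOn convex_univ).add_const (c i)
  have a_lipschitz (i : ℕ) : LipschitzWith ‖l i‖₊ (a i) := by
    simpa using (l i).lipschitz.add (LipschitzWith.const (c i))
  have a_bdd (x : E) : BddAbove (range fun i => a i x) := ⟨f x, forall_mem_range.2 fun i => hle i x⟩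
  refine ⟨partialSups a, (partialSups a).monotone, fun n => ?_, fun n => ?_, fun x => ?_⟩
  · induction n with
    | zero => simpa using a_convex 0
    | succ n ih =>
      rw [partialSups_add_one]
      exact ih.sup (a_convex (n + 1))
  · induction n with
    | zero => exact ⟨_, by simpa using a_lipschitz 0⟩
    | succ n ih =>
      obtain ⟨K, hK⟩ := ih
      rw [partialSups_add_one]
      exact ⟨_, hK.max (a_lipschitz (n + 1))⟩
  · have hfx : ⨆ i, a i x = f x := by
      conv_rhs => rw [← hsup, iSup_apply]
      rfl
    simp only [Pi.partialSups_apply]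
    rw [← hfx, ← ciSup_partialSups_eq (a_bdd x)]
    exact tendsto_atTop_ciSup (partialSups _).monotone (bddAbove_range_partialSups.2 (a_bdd x))

end ConvexApproximation

lemma integrable_norm_of_integrable_norm_sq {E : Type*} [NormedAddCommGroup E] [MeasurableSpace E]
    [OpensMeasurableSpace E] [SecondCountableTopology E] {μ : Measure E} [IsFiniteMeasure μ]
    (hμ : Integrable (fun x => ‖x‖ ^ 2) μ) : Integrable (fun x => ‖x‖) μ :=
  ((memLp_two_iff_integrable_sq_norm aestronglyMeasurable_id).2 hμ).integrable one_le_two |>.norm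

section Quadratic

variable {H : Type*} [NormedAddCommGroup H] [InnerProductSpace ℝ H]

lemma exists_convexOn_between {u v : H → ℝ} (huv : ∀ x y, u x + ⟪x, y⟫ ≤ v y) :
    ∃ g : H → ℝ, ConvexOn ℝ univ g ∧ (∀ x y, u x + ⟪x, y⟫ ≤ g y) ∧ g ≤ v := by
  have bdd (y : H) : BddAbove (range fun x => u x + ⟪x, y⟫) :=
    ⟨v y, forall_mem_range.2 (huv · y)⟩
  have le_g (x y : H) : u x + ⟪x, y⟫ ≤ ⨆ x, u x + ⟪x, y⟫ := le_ciSup (bdd y) x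
  refine ⟨fun y => ⨆ x, u x + ⟪x, y⟫, ⟨convex_univ, fun y _ z _ r s hr hs hrs => ?_⟩, le_g,
    fun y => ciSup_le (huv · y)⟩
  refine ciSup_le fun x => ?_
  calc u x + ⟪x, r • y + s • z⟫ = r * (u x + ⟪x, y⟫) + s * (u x + ⟪x, z⟫) := by
        rw [inner_add_right, real_inner_smul_right, real_inner_smul_right]
        linear_combination -u x * hrs
    _ ≤ r * (⨆ x, u x + ⟪x, y⟫) + s * ⨆ x, u x + ⟪x, z⟫ := by
        gcongr
        · exact le_g x y
        · exact le_g x z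

lemma integral_inner_eq_sub [MeasurableSpace H] [OpensMeasurableSpace H]
    [SecondCountableTopology H]
    {μ ν : Measure H} {π : Measure (H × H)} (hfst : π.map Prod.fst = μ) (hsnd : π.map Prod.snd = ν)
    (hμ : Integrable (fun x => ‖x‖ ^ 2) μ) (hν : Integrable (fun y => ‖y‖ ^ 2) ν) :
    ∫ p, ⟪p.1, p.2⟫ ∂π =
      (∫ x, ‖x‖ ^ 2 ∂μ + ∫ y, ‖y‖ ^ 2 ∂ν) / 2 - ∫ p, ‖p.1 - p.2‖ ^ 2 / 2 ∂π := by
  have hfst2 : Integrable (fun p => ‖p.1‖ ^ 2) π := (hfst ▸ hμ).comp_measurable measurable_fst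
  have hsnd2 : Integrable (fun p => ‖p.2‖ ^ 2) π := (hsnd ▸ hν).comp_measurable measurable_snd
  have hhalf : Integrable (fun p => (‖p.1‖ ^ 2 + ‖p.2‖ ^ 2) / 2) π := (hfst2.add hsnd2).div_const 2
  have hinner : Integrable (fun p => ⟪p.1, p.2⟫) π :=
    hhalf.mono' (by fun_prop) (ae_of_all π fun p => (norm_inner_le_norm p.1 p.2).trans
      (by linarith [two_mul_le_add_sq ‖p.1‖ ‖p.2‖]))
  have polarization (p : H × H) :
      ‖p.1 - p.2‖ ^ 2 / 2 = (‖p.1‖ ^ 2 + ‖p.2‖ ^ 2) / 2 - ⟪p.1, p.2⟫ := by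
    rw [norm_sub_sq_real]
    ring
  have hμπ : ∫ x, ‖x‖ ^ 2 ∂μ = ∫ p, ‖p.1‖ ^ 2 ∂π := by
    rw [← hfst, integral_map measurable_fst.aemeasurable (by fun_prop)]
  have hνπ : ∫ y, ‖y‖ ^ 2 ∂ν = ∫ p, ‖p.2‖ ^ 2 ∂π := by
    rw [← hsnd, integral_map measurable_snd.aemeasurable (by fun_prop)]
  simp_rw [polarization]
  rw [integral_sub hhalf hinner, integral_div, integral_add hfst2 hsnd2, hμπ, hνπ, sub_sub_cancel]

end Quadratic

lemma integral_inner_le_OTcost {d : ℕ} {μ ν : Measure (EuclideanSpace ℝ (Fin d))}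
    (hμ : Integrable (fun x => ‖x‖ ^ 2) μ) (hν : Integrable (fun y => ‖y‖ ^ 2) ν)
    {π : Measure (EuclideanSpace ℝ (Fin d) × EuclideanSpace ℝ (Fin d))} (hπ : π ∈ Couplings μ ν) :
    ∫ p, ⟪p.1, p.2⟫ ∂π ≤ OTcost μ ν := by
  refine le_csSup ⟨(∫ x, ‖x‖ ^ 2 ∂μ + ∫ y, ‖y‖ ^ 2 ∂ν) / 2, ?_⟩ ⟨π, hπ, rfl⟩
  rintro _ ⟨ρ, ⟨hfst, hsnd⟩, rfl⟩
  rw [integral_inner_eq_sub hfst hsnd hμ hν]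
  exact sub_le_self _ (integral_nonneg fun p => by positivity)

namespace ConvexOrder

variable {d : ℕ} {μ ν : Measure (EuclideanSpace ℝ (Fin d))}
  [IsFiniteMeasure μ] [IsFiniteMeasure ν]

lemma integrable (h : ConvexOrder μ ν) (hμ : Integrable (fun x => ‖x‖) μ)
    (hν : Integrable (fun y => ‖y‖) ν)
    {f : EuclideanSpace ℝ (Fin d) → ℝ} (hf : ConvexOn ℝ univ f) (hfν : Integrable f ν) :
    Integrable f μ := by
  obtain ⟨p, p_mono, p_convex, p_lipschitz, p_lim⟩ :=
    exists_monotone_lipschitz_convexOn_tendsto hf hf.locallyLipschitz.continuous.lowerSemicontinuous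
  have p_integrable (n : ℕ) : Integrable (p n) μ ∧ Integrable (p n) ν :=
    have ⟨_, hK⟩ := p_lipschitz n
    ⟨integrable_of_lipschitzWith hK hμ, integrable_of_lipschitzWith hK hν⟩
  have p_le (n : ℕ) : p n ≤ f := fun x =>
    Monotone.ge_of_tendsto (fun _ _ hmn => p_mono hmn x) (p_lim x) n
  refine integrable_of_monotone_of_integral_le (fun n => (p_integrable n).1) p_mono p_lim
    (C := ∫ y, f y ∂ν) fun n => ?_
  calc ∫ x, p n x ∂μ ≤ ∫ y, p n y ∂ν := h _ (p_convex n) (p_integrable n).1 (p_integrable n).2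
    _ ≤ ∫ y, f y ∂ν := integral_mono (p_integrable n).2 hfν (p_le n)

lemma integrable_norm_sq (h : ConvexOrder μ ν) (hμ : Integrable (fun x => ‖x‖) μ)
    (hν : Integrable (fun y => ‖y‖ ^ 2) ν) : Integrable (fun x => ‖x‖ ^ 2) μ :=
  h.integrable hμ (integrable_norm_of_integrable_norm_sq hν)
    (convexOn_univ_norm.pow (fun _ _ => norm_nonneg _) 2) hν

lemma integral_add_integral_le (h : ConvexOrder μ ν)
    (hμ : Integrable (fun x => ‖x‖ ^ 2) μ) (hν : Integrable (fun y => ‖y‖ ^ 2) ν)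
    {φ ψ : EuclideanSpace ℝ (Fin d) → ℝ} (hφ : Integrable φ μ) (hψ : Integrable ψ ν)
    (hφψ : ∀ x y, φ x + ψ y ≤ ‖x - y‖ ^ 2 / 2) :
    ∫ x, φ x ∂μ + ∫ y, ψ y ∂ν ≤ (∫ y, ‖y‖ ^ 2 ∂ν - ∫ x, ‖x‖ ^ 2 ∂μ) / 2 := by
  obtain ⟨g, g_convex, le_g, g_le⟩ := exists_convexOn_between
    (u := fun x => φ x - ‖x‖ ^ 2 / 2) (v := fun y => ‖y‖ ^ 2 / 2 - ψ y) fun x y => by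
      linarith [hφψ x y, norm_sub_sq_real x y]
  have hgν : Integrable g ν :=
    integrable_of_le_of_le g_convex.locallyLipschitz.continuous.aestronglyMeasurable
      (ae_of_all ν fun y => by simpa using le_g 0 y) (ae_of_all ν g_le)
      (integrable_const (φ 0)) ((hν.div_const 2).sub hψ)
  have hgμ : Integrable g μ := h.integrable (integrable_norm_of_integrable_norm_sq hμ)
    (integrable_norm_of_integrable_norm_sq hν) g_convex hgν
  have hle : ∫ x, (φ x + ‖x‖ ^ 2 / 2) ∂μ ≤ ∫ y, (‖y‖ ^ 2 / 2 - ψ y) ∂ν :=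
    calc ∫ x, (φ x + ‖x‖ ^ 2 / 2) ∂μ ≤ ∫ x, g x ∂μ :=
          integral_mono (hφ.add (hμ.div_const 2)) hgμ fun x => by
            linarith [le_g x x, real_inner_self_eq_norm_sq x]
      _ ≤ ∫ y, g y ∂ν := h g g_convex hgμ hgν
      _ ≤ ∫ y, (‖y‖ ^ 2 / 2 - ψ y) ∂ν := integral_mono hgν ((hν.div_const 2).sub hψ) g_le
  rw [integral_add hφ (hμ.div_const 2), integral_sub (hν.div_const 2) hψ, integral_div,
    integral_div] at hle
  linarith

end ConvexOrder

theorem stmt7_general (d : ℕ) (μ ν : Measure (EuclideanSpace ℝ (Fin d)))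
    [IsProbabilityMeasure μ] [IsProbabilityMeasure ν]
    (hμ : Integrable (fun x => ‖x‖) μ) (hν : Integrable (fun y => ‖y‖ ^ 2) ν)
    (h : ConvexOrder μ ν) :
    ∃ π ∈ Couplings μ ν, ∫ x, ‖x‖ ^ 2 ∂μ ≤ ∫ p, ⟪p.1, p.2⟫ ∂π := by
  have hμ2 := h.integrable_norm_sq hμ hν
  obtain ⟨π, hfst, hsnd, -, hπ⟩ := exists_coupling_integral_le
    (f := fun p : EuclideanSpace ℝ (Fin d) × EuclideanSpace ℝ (Fin d) => ‖p.1 - p.2‖ ^ 2 / 2)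
    (by fun_prop) (fun p => by positivity) hμ2 hν
    (fun x y => by linarith [parallelogram_law_with_norm ℝ x y, sq_nonneg ‖x + y‖])
    fun φ ψ => h.integral_add_integral_le hμ2 hν
  refine ⟨π, ⟨hfst, hsnd⟩, ?_⟩
  rw [integral_inner_eq_sub hfst hsnd hμ2 hν]
  linarith

theorem stmt7 (d : ℕ) (hd : 1 ≤ d)
    (μ ν : Measure (EuclideanSpace ℝ (Fin d)))
    [IsProbabilityMeasure μ] [IsProbabilityMeasure ν]
    (hμ : Integrable (fun x => ‖x‖ ^ 2) μ) (hν : Integrable (fun y => ‖y‖ ^ 2) ν)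
    (h : ConvexOrder μ ν) :
    ∫ x, ‖x‖ ^ 2 ∂μ ≤ OTcost μ ν := by
  obtain ⟨π, hπ, hle⟩ := stmt7_general d μ ν (integrable_norm_of_integrable_norm_sq hμ) hν h
  exact hle.trans (integral_inner_le_OTcost hμ hν hπ)
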